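/- Let α, β > −1 with α > β and α + β ≥ −1, and let n ≥ 1 be an integer. Then d_{k,n} > 0 for every integer k with 0 ≤ k ≤ n. -/

import Mathlib

open Finset

/-- Pochhammer symbol `(a)_j = a (a+1) ⋯ (a+j-1)`. -/
noncomputable def poch (a : ℝ) (j : ℕ) : ℝ := ∏ i ∈ Finset.range j, (a + i)

/-- Generalized binomial coefficient `binom(a, m) = a (a-1) ⋯ (a-m+1) / m!`. -/
noncomputable def gbinom (a : ℝ) (m : ℕ) : ℝ :=
  (∏ i ∈ Finset.range m, (a - i)) / (Nat.factorial m)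

/-- Jacobi polynomial `P_n^{(α,β)}(x)` of a real variable. -/
noncomputable def jacobiP (α β : ℝ) (n : ℕ) (x : ℝ) : ℝ :=
  (1 / 2 ^ n) * ∑ k ∈ Finset.range (n + 1),
    gbinom ((n : ℝ) + α) (n - k) * gbinom ((n : ℝ) + β) k * (x - 1) ^ k * (x + 1) ^ (n - k)

/-- Jacobi polynomial `P_n^{(α,β)}(z)` of a complex variable. -/
noncomputable def jacobiC (α β : ℝ) (n : ℕ) (z : ℂ) : ℂ :=
  (1 / 2 ^ n) * ∑ k ∈ Finset.range (n + 1),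
    ((gbinom ((n : ℝ) + α) (n - k) * gbinom ((n : ℝ) + β) k : ℝ) : ℂ) *
      (z - 1) ^ k * (z + 1) ^ (n - k)

/-- Chebyshev-connection coefficients `d_{k,n}`, given by a terminating ₃F₂ sum. -/
noncomputable def dCoeff (α β : ℝ) (n k : ℕ) : ℝ :=
  (poch ((n : ℝ) + α + β + 1) k * poch ((k : ℝ) + α + 1) (n - k)) /
      ((Nat.factorial (n - k)) * 2 ^ (2 * k) * (Nat.factorial k)) *
    ∑ j ∈ Finset.range (n - k + 1),
      (poch ((k : ℝ) - n) j * poch ((n : ℝ) + k + α + β + 1) j * poch ((k : ℝ) + 1 / 2) j) /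
        (poch ((k : ℝ) + α + 1) j * poch (2 * (k : ℝ) + 1) j * (Nat.factorial j))

/-- The Bernstein ellipse `E_ρ`: the set of points `z = (u + u⁻¹)/2` with `|u| = ρ`. -/
def bernsteinEllipse (ρ : ℝ) : Set ℂ :=
  {z : ℂ | ∃ u : ℂ, ‖u‖ = ρ ∧ z = (u + u⁻¹) / 2}

/-!
Up to the positive prefactor, `d_{k,n}` is the value at `y = b / 2` of the Hahn polynomial
`₃F₂(-N, N + σ, y; a, b; 1)` with `N = n - k`, `σ = 2k + α + β + 1`, `a = k + α + 1` and
`b = 2k + 1`. In the ultraspherical case `2a = σ + 1` Watson's summation theorem makes this value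
vanish for odd `N`, so there the middle coefficient of the three-term recurrence in `N` is zero at
`y = b / 2`. That coefficient is affine in `a`, hence it is `a - (σ + 1) / 2` times an explicit
positive factor. For `α > β` the recurrence therefore has nonnegative coefficients, and positivity
follows by induction on `N`.
-/

section Pochhammer

@[simp]
theorem poch_zero (x : ℝ) : poch x 0 = 1 := prod_range_zero _

theorem poch_succ_right (x : ℝ) (j : ℕ) : poch x (j + 1) = poch x j * (x + j) :=
  prod_range_succ _ _

theorem poch_succ_left (x : ℝ) (j : ℕ) : poch x (j + 1) = x * poch (x + 1) j := by
  simp only [poch, prod_range_succ', Nat.cast_add, Nat.cast_one, Nat.cast_zero, add_zero,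
    add_right_comm, ← add_assoc, mul_comm]

theorem mul_poch_add_one (x : ℝ) (j : ℕ) : x * poch (x + 1) j = poch x j * (x + j) := by
  rw [← poch_succ_left, poch_succ_right]

theorem poch_pos {x : ℝ} (hx : 0 < x) (j : ℕ) : 0 < poch x j :=
  prod_pos fun _ _ ↦ by positivity

theorem poch_neg_natCast_eq_zero {N j : ℕ} (h : N < j) : poch (-N) j = 0 :=
  prod_eq_zero (mem_range.mpr h) (neg_add_cancel _)

end Pochhammer

/-- The coefficient of `(y)_j` in the hypergeometric series `₃F₂(-ν, ν + σ, y; a, b; 1)`. The degree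
`ν` is a real number here, so that it can be shifted by `1` in both directions. -/
noncomputable def hahnCoeff (σ a b ν : ℝ) (j : ℕ) : ℝ :=
  poch (-ν) j * poch (ν + σ) j / (poch a j * poch b j * j.factorial)

/-- The Hahn polynomial of degree `N` in the variable `y`, that is `₃F₂(-N, N + σ, y; a, b; 1)`.
In the classical notation `Q_N(x; α, β, M)` one has `y = -x`, `σ = α + β + 1`, `a = α + 1` and
`b = -M`. -/
noncomputable def hahn (σ a b : ℝ) (N : ℕ) (y : ℝ) : ℝ :=
  ∑ j ∈ range (N + 1), hahnCoeff σ a b N j * poch y j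

/-- The coefficient of the polynomial of degree `ν + 1` in the three-term recurrence of the Hahn
polynomials; it is `-A_ν` in the classical notation. -/
noncomputable def hahnUp (σ a b ν : ℝ) : ℝ :=
  (ν + σ) * (ν + a) * (ν + b) / ((2 * ν + σ) * (2 * ν + σ + 1))

/-- The coefficient of the polynomial of degree `ν - 1` in the three-term recurrence of the Hahn
polynomials; it is `C_ν` in the classical notation. -/
noncomputable def hahnDown (σ a b ν : ℝ) : ℝ :=
  ν * (ν + σ - a) * (ν + σ - b) / ((2 * ν + σ) * (2 * ν + σ - 1))

section Recurrence

variable {σ a b ν : ℝ}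

@[simp]
theorem hahnCoeff_zero_right : hahnCoeff σ a b ν 0 = 1 := by
  simp [hahnCoeff]

theorem hahnCoeff_natCast_eq_zero {N j : ℕ} (h : N < j) : hahnCoeff σ a b N j = 0 := by
  simp [hahnCoeff, poch_neg_natCast_eq_zero h]

theorem hahn_eq_sum_range {N L : ℕ} (h : N < L) (y : ℝ) :
    hahn σ a b N y = ∑ j ∈ range L, hahnCoeff σ a b N j * poch y j :=
  sum_subset (range_subset_range.mpr h) fun j _ hj ↦ by
    rw [hahnCoeff_natCast_eq_zero (by simpa using hj), zero_mul]

theorem hahnCoeff_div_mul (j : ℕ) :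
    hahnCoeff σ a b ν j / ((a + j) * (b + j)) =
      poch (-ν) j * poch (ν + σ) j / (poch a (j + 1) * poch b (j + 1) * j.factorial) := by
  rw [hahnCoeff, div_div, poch_succ_right a, poch_succ_right b]
  congr 1
  ring

theorem succ_mul_hahnCoeff_succ (j : ℕ) :
    (j + 1) * hahnCoeff σ a b ν (j + 1) =
      (-ν + j) * (ν + σ + j) * (hahnCoeff σ a b ν j / ((a + j) * (b + j))) := by
  rw [hahnCoeff_div_mul, hahnCoeff, poch_succ_right (-ν), poch_succ_right (ν + σ),
    Nat.factorial_succ, Nat.cast_mul, Nat.cast_add_one]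
  field_simp

theorem hahnCoeff_add_one_sub_hahnCoeff (j : ℕ) :
    hahnCoeff σ a b (ν + 1) (j + 1) - hahnCoeff σ a b ν (j + 1) =
      -(2 * ν + σ + 1) * (poch (-ν) j * poch (ν + σ + 1) j /
        (poch a (j + 1) * poch b (j + 1) * j.factorial)) := by
  have lower : poch (-(ν + 1)) (j + 1) = -(ν + 1) * poch (-ν) j := by
    rw [poch_succ_left, show -(ν + 1) + 1 = -ν by ring]
  have upper : poch (ν + 1 + σ) (j + 1) = poch (ν + σ + 1) j * (ν + σ + 1 + j) := by
    rw [poch_succ_right, add_right_comm]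
  rw [hahnCoeff, hahnCoeff, lower, upper, poch_succ_right (-ν), poch_succ_left (ν + σ),
    Nat.factorial_succ, Nat.cast_mul, Nat.cast_add_one]
  field_simp
  ring

theorem hahnUp_mul_hahnCoeff_sub (h : 2 * ν + σ + 1 ≠ 0) (j : ℕ) :
    hahnUp σ a b ν * (hahnCoeff σ a b (ν + 1) (j + 1) - hahnCoeff σ a b ν (j + 1)) =
      -((ν + a) * (ν + b) * (ν + σ + j)) / (2 * ν + σ) *
        (hahnCoeff σ a b ν j / ((a + j) * (b + j))) := by
  have cancel : hahnUp σ a b ν * (2 * ν + σ + 1) =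
      (ν + a) * (ν + b) / (2 * ν + σ) * (ν + σ) := by
    rw [hahnUp, div_mul_eq_mul_div, mul_div_mul_right _ _ h]
    ring
  calc
    _ = -(hahnUp σ a b ν * (2 * ν + σ + 1)) * (poch (-ν) j * poch (ν + σ + 1) j /
          (poch a (j + 1) * poch b (j + 1) * j.factorial)) := by
      rw [hahnCoeff_add_one_sub_hahnCoeff]
      ring
    _ = -((ν + a) * (ν + b) / (2 * ν + σ)) * (poch (-ν) j * ((ν + σ) * poch (ν + σ + 1) j) /
          (poch a (j + 1) * poch b (j + 1) * j.factorial)) := by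
      rw [cancel]
      ring
    _ = _ := by
      rw [mul_poch_add_one, hahnCoeff_div_mul]
      ring

theorem hahnDown_mul_hahnCoeff_sub (h : 2 * ν + σ - 1 ≠ 0) (j : ℕ) :
    hahnDown σ a b ν * (hahnCoeff σ a b ν (j + 1) - hahnCoeff σ a b (ν - 1) (j + 1)) =
      (ν + σ - a) * (ν + σ - b) * (-ν + j) / (2 * ν + σ) *
        (hahnCoeff σ a b ν j / ((a + j) * (b + j))) := by
  have cancel : hahnDown σ a b ν * (2 * ν + σ - 1) =
      (ν + σ - a) * (ν + σ - b) / (2 * ν + σ) * ν := by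
    rw [hahnDown, div_mul_eq_mul_div, mul_div_mul_right _ _ h]
    ring
  have difference := hahnCoeff_add_one_sub_hahnCoeff (σ := σ) (a := a) (b := b) (ν := ν - 1) j
  rw [sub_add_cancel, show -(ν - 1) = -ν + 1 by ring,
    show ν - 1 + σ + 1 = ν + σ by ring] at difference
  calc
    _ = -(hahnDown σ a b ν * (2 * ν + σ - 1)) * (poch (-ν + 1) j * poch (ν + σ) j /
          (poch a (j + 1) * poch b (j + 1) * j.factorial)) := by
      rw [difference]
      ring
    _ = (ν + σ - a) * (ν + σ - b) / (2 * ν + σ) * (-ν * poch (-ν + 1) j * poch (ν + σ) j /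
          (poch a (j + 1) * poch b (j + 1) * j.factorial)) := by
      rw [cancel]
      ring
    _ = _ := by
      rw [mul_poch_add_one, hahnCoeff_div_mul]
      ring

theorem hahnCoeff_recurrence {j : ℕ} (ha : a + j ≠ 0) (hb : b + j ≠ 0)
    (h₀ : 2 * ν + σ - 1 ≠ 0) (h₁ : 2 * ν + σ ≠ 0) (h₂ : 2 * ν + σ + 1 ≠ 0) :
    hahnUp σ a b ν * (hahnCoeff σ a b (ν + 1) (j + 1) - hahnCoeff σ a b ν (j + 1)) +
        hahnDown σ a b ν * (hahnCoeff σ a b ν (j + 1) - hahnCoeff σ a b (ν - 1) (j + 1)) =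
      (j + 1) * hahnCoeff σ a b ν (j + 1) - hahnCoeff σ a b ν j := by
  have common_factor :
      hahnCoeff σ a b ν j = (a + j) * (b + j) * (hahnCoeff σ a b ν j / ((a + j) * (b + j))) :=
    (mul_div_cancel₀ _ (mul_ne_zero ha hb)).symm
  have numerators :
      -((ν + a) * (ν + b) * (ν + σ + j)) / (2 * ν + σ) +
          (ν + σ - a) * (ν + σ - b) * (-ν + j) / (2 * ν + σ) =
        (-ν + j) * (ν + σ + j) - (a + j) * (b + j) := by
    rw [← add_div, div_eq_iff h₁]
    ring
  rw [hahnUp_mul_hahnCoeff_sub h₂, hahnDown_mul_hahnCoeff_sub h₀, succ_mul_hahnCoeff_succ,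
    ← add_mul, numerators, sub_mul, ← common_factor]

theorem sum_range_hahnCoeff_recurrence (ha : ∀ i : ℕ, a + i ≠ 0) (hb : ∀ i : ℕ, b + i ≠ 0)
    (h₀ : 2 * ν + σ - 1 ≠ 0) (h₁ : 2 * ν + σ ≠ 0) (h₂ : 2 * ν + σ + 1 ≠ 0) (y : ℝ) (L : ℕ) :
    ∑ j ∈ range (L + 1),
        (hahnUp σ a b ν * (hahnCoeff σ a b (ν + 1) j - hahnCoeff σ a b ν j) +
          hahnDown σ a b ν * (hahnCoeff σ a b ν j - hahnCoeff σ a b (ν - 1) j) +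
          y * hahnCoeff σ a b ν j) * poch y j =
      hahnCoeff σ a b ν L * poch y (L + 1) := by
  induction L with
  | zero => simp [poch_succ_right]
  | succ L ih =>
    rw [sum_range_succ, ih, hahnCoeff_recurrence (ha L) (hb L) h₀ h₁ h₂, poch_succ_right y (L + 1)]
    push_cast
    ring

theorem hahn_recurrence (hσ : ∀ i : ℕ, σ + 1 + i ≠ 0) (ha : ∀ i : ℕ, a + i ≠ 0)
    (hb : ∀ i : ℕ, b + i ≠ 0) (N : ℕ) (y : ℝ) :
    hahnUp σ a b (N + 1) * hahn σ a b (N + 2) y =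
      (hahnUp σ a b (N + 1) - hahnDown σ a b (N + 1) - y) * hahn σ a b (N + 1) y +
        hahnDown σ a b (N + 1) * hahn σ a b N y := by
  have h₀ : 2 * ((N : ℝ) + 1) + σ - 1 ≠ 0 := by
    convert hσ (2 * N) using 1
    push_cast
    ring
  have h₁ : 2 * ((N : ℝ) + 1) + σ ≠ 0 := by
    convert hσ (2 * N + 1) using 1
    push_cast
    ring
  have h₂ : 2 * ((N : ℝ) + 1) + σ + 1 ≠ 0 := by
    convert hσ (2 * N + 2) using 1
    push_cast
    ring
  have telescoped := sum_range_hahnCoeff_recurrence ha hb h₀ h₁ h₂ y (N + 2)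
  have top_coeff : hahnCoeff σ a b ((N : ℝ) + 1) (N + 2) = 0 := by
    exact_mod_cast hahnCoeff_natCast_eq_zero (Nat.lt_succ_self (N + 1))
  rw [top_coeff, zero_mul, add_sub_cancel_right, add_assoc (N : ℝ), one_add_one_eq_two]
    at telescoped
  rw [← sub_eq_zero, ← telescoped, hahn_eq_sum_range (Nat.lt_succ_self (N + 2)),
    hahn_eq_sum_range (show N + 1 < N + 2 + 1 by omega),
    hahn_eq_sum_range (show N < N + 2 + 1 by omega)]
  simp only [mul_sum, ← sum_add_distrib, ← sum_sub_distrib]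
  refine sum_congr rfl fun j _ ↦ ?_
  push_cast
  ring

end Recurrence

theorem pos_of_three_term_recurrence {R : Type*} [Semiring R] [LinearOrder R]
    [IsStrictOrderedRing R] {q A B C : ℕ → R} (hq₀ : 0 < q 0) (hq₁ : 0 < q 1)
    (hA : ∀ n, 0 < A n) (hB : ∀ n, 0 < B n) (hC : ∀ n, 0 ≤ C n)
    (hrec : ∀ n, A n * q (n + 2) = B n * q (n + 1) + C n * q n) (n : ℕ) : 0 < q n := by
  induction n using Nat.twoStepInduction with
  | zero => exact hq₀
  | one => exact hq₁
  | more n ih₀ ih₁ =>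
    refine pos_of_mul_pos_right (a := A n) ?_ (hA n).le
    rw [hrec]
    exact add_pos_of_pos_of_nonneg (mul_pos (hB n) ih₁) (mul_nonneg (hC n) ih₀.le)

section Positivity

variable {σ a b ν : ℝ}

theorem hahnUp_pos (hσ : 0 < ν + σ) (ha : 0 < ν + a) (hb : 0 < ν + b) (hν : 0 < 2 * ν + σ) :
    0 < hahnUp σ a b ν := by
  unfold hahnUp
  positivity

theorem hahnDown_nonneg (hν : 0 ≤ ν) (ha : a ≤ ν + σ) (hb : b ≤ ν + σ)
    (hσ : 0 ≤ 2 * ν + σ - 1) : 0 ≤ hahnDown σ a b ν :=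
  div_nonneg (mul_nonneg (mul_nonneg hν (sub_nonneg.mpr ha)) (sub_nonneg.mpr hb))
    (mul_nonneg (by linarith) hσ)

theorem hahnUp_sub_hahnDown_sub_half (h₀ : 2 * ν + σ - 1 ≠ 0) (h₁ : 2 * ν + σ ≠ 0)
    (h₂ : 2 * ν + σ + 1 ≠ 0) :
    hahnUp σ a b ν - hahnDown σ a b ν - b / 2 =
      (a - (σ + 1) / 2) *
        ((ν + σ) * (ν + b) / ((2 * ν + σ) * (2 * ν + σ + 1)) +
          ν * (ν + σ - b) / ((2 * ν + σ) * (2 * ν + σ - 1))) := by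
  unfold hahnUp hahnDown
  generalize hw : 2 * ν + σ = w at *
  obtain rfl : σ = w - 2 * ν := by linarith
  field_simp
  ring

theorem hahnUp_sub_hahnDown_sub_half_pos (hν : 0 ≤ ν) (hσ : 0 < ν + σ)
    (hσ' : 0 < 2 * ν + σ - 1) (hb : 0 < ν + b) (hbσ : b ≤ ν + σ) (ha : σ + 1 < 2 * a) :
    0 < hahnUp σ a b ν - hahnDown σ a b ν - b / 2 := by
  have h₁ : 0 < 2 * ν + σ := by linarith
  have h₂ : 0 < a - (σ + 1) / 2 := by linarith
  have := sub_nonneg.mpr hbσ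
  rw [hahnUp_sub_hahnDown_sub_half hσ'.ne' h₁.ne' (by positivity)]
  positivity

theorem hahn_zero (y : ℝ) : hahn σ a b 0 y = 1 := by
  simp [hahn]

theorem hahn_one (y : ℝ) : hahn σ a b 1 y = 1 - (σ + 1) * y / (a * b) := by
  rw [hahn, sum_range_succ, sum_range_one, hahnCoeff_zero_right, hahnCoeff]
  simp only [poch_succ_right, poch_zero, Nat.cast_one, Nat.cast_zero, Nat.factorial_one]
  ring

theorem hahn_half_pos (hb : 0 < b) (hbσ : b ≤ σ + 1) (haσ : a ≤ σ + 1) (ha : σ + 1 < 2 * a)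
    (N : ℕ) : 0 < hahn σ a b N (b / 2) := by
  have hσ : 0 < σ + 1 := hb.trans_le hbσ
  have ha_pos : 0 < a := by linarith
  refine pos_of_three_term_recurrence (q := fun m ↦ hahn σ a b m (b / 2))
    (A := fun m ↦ hahnUp σ a b (m + 1))
    (B := fun m ↦ hahnUp σ a b (m + 1) - hahnDown σ a b (m + 1) - b / 2)
    (C := fun m ↦ hahnDown σ a b (m + 1)) ?_ ?_ (fun m ↦ ?_) (fun m ↦ ?_) (fun m ↦ ?_)
    (fun m ↦ hahn_recurrence (fun i ↦ by positivity) (fun i ↦ by positivity)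
      (fun i ↦ by positivity) m _) N
  · rw [hahn_zero]
    exact one_pos
  · have value : hahn σ a b 1 (b / 2) = 1 - (σ + 1) / (2 * a) := by
      rw [hahn_one]
      field_simp
    rw [value, sub_pos, div_lt_one (by positivity)]
    exact ha
  · apply hahnUp_pos <;> linarith
  · apply hahnUp_sub_hahnDown_sub_half_pos <;> linarith
  · apply hahnDown_nonneg <;> linarith

end Positivity

theorem dCoeff_eq_mul_hahn (α β : ℝ) {n k : ℕ} (hk : k ≤ n) :
    dCoeff α β n k =
      poch (n + α + β + 1) k * poch (k + α + 1) (n - k) /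
          ((n - k).factorial * 2 ^ (2 * k) * k.factorial) *
        hahn (2 * k + α + β + 1) (k + α + 1) (2 * k + 1) (n - k) ((2 * k + 1) / 2) := by
  rw [dCoeff, hahn]
  congr 1
  refine sum_congr rfl fun j _ ↦ ?_
  rw [hahnCoeff, Nat.cast_sub hk, neg_sub,
    show (n : ℝ) - k + (2 * k + α + β + 1) = n + k + α + β + 1 by ring,
    show (2 * (k : ℝ) + 1) / 2 = k + 1 / 2 by ring, div_mul_eq_mul_div]

/-- if `α > β` and `α + β ≥ -1`, then all coefficients `d_{k,n}` are positive. -/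
theorem dCoeff_pos
    (α β : ℝ) (hα : -1 < α) (hβ : -1 < β) (hab : β < α) (hsum : -1 ≤ α + β)
    (n : ℕ) (hn : 1 ≤ n) (k : ℕ) (hk0 : 0 ≤ k) (hk : k ≤ n) :
    0 < dCoeff α β n k := by
  have hn' : (1 : ℝ) ≤ n := by exact_mod_cast hn
  have poch_left : 0 < poch (n + α + β + 1) k := poch_pos (by linarith) k
  have poch_right : 0 < poch (k + α + 1) (n - k) := poch_pos (by linarith) (n - k)
  have hahn_pos :
      0 < hahn (2 * k + α + β + 1) (k + α + 1) (2 * k + 1) (n - k) ((2 * k + 1) / 2) := by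
    apply hahn_half_pos <;> linarith
  rw [dCoeff_eq_mul_hahn α β hk]
  positivity
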